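/- Let A, B, C ⊆ ℝ² be mutually avoiding sets of n points each. Then there exist enumerations A = {a₁,…,aₙ}, B = {b₁,…,bₙ}, C = {c₁,…,cₙ} such that for all collinear triples with one point in each set: (i) if (a_i, b_{j₁}, c_{k₁}) and (a_i, b_{j₂}, c_{k₂}) are collinear triples and j₁ < j₂, then k₁ < k₂; (ii) if (a_{i₁}, b_j, c_{k₁}) and (a_{i₂}, b_j, c_{k₂}) are collinear triples and i₁ > i₂, then k₁ < k₂; (iii) if (a_{i₁}, b_{j₁}, c_k) and (a_{i₂}, b_{j₂}, c_k) are collinear triples and i₁ < i₂, then j₁ < j₂. -/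

import Mathlib

/-!
Let `cross p q r` be twice the signed area of the triangle `p q r`.  Since a line through two
points of one set misses the hulls of the other two, the sign of `cross p x y` for distinct
`x, y ∈ S` does not depend on the choice of `p` in another set `T` (`cross_mul_pos`).
Thus "`cross p x y > 0`" is a relation on `S` depending only on `T`, and it is a strict total
order because `p` lies outside the hull of `S` (`exists_enum_seen`).

Write a transversal collinear triple as `b = (1 - s) a + s c`.  The signs of `s` and `1 - s`,
which tell which of the three points is the middle one, are the same for all such triples
(`exists_uniform_signs`): a line through two points of `A` passing through the `A`-points of two
triples has `b` and `c` on the same side exactly when `s > 0`, for either triple, and similarly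
for lines through points of `C`.

Now order `B` and `C` as seen from `A`, and order `A` as seen from `C`, reversed when `B` is the
middle set.  If two triples share a point `p`, the orders of the two remaining pairs as seen from
`p` agree, because the two ratios involved have the same sign.  Passing between the two
orders on one set seen from the two others, for a pair containing a point of a triple, costs the
sign `s`, `-s(1-s)` or `1-s` on `A`, `B` or `C`; the product of these signs is negative, which
is the reversal appearing in condition (ii).
-/

/-- Points of the Euclidean plane. -/
abbrev Pt : Type := ℝ × ℝ

/-- The line through two points, as a set. -/
def lineThrough (p q : Pt) : Set Pt :=
  (affineSpan ℝ ({p, q} : Set Pt) : AffineSubspace ℝ Pt)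

/-- Every line through two distinct points of `P` is disjoint from the convex hull of `Q`. -/
def AvoidsHull (P Q : Finset Pt) : Prop :=
  ∀ p ∈ P, ∀ q ∈ P, p ≠ q → Disjoint (lineThrough p q) (convexHull ℝ (Q : Set Pt))

/-- Three finite point sets are mutually avoiding. -/
def MutuallyAvoiding (P Q S : Finset Pt) : Prop :=
  AvoidsHull P Q ∧ AvoidsHull P S ∧ AvoidsHull Q P ∧ AvoidsHull Q S ∧
    AvoidsHull S P ∧ AvoidsHull S Q

/-- Twice the signed area of the triangle `p q r`. -/
def cross (p q r : Pt) : ℝ :=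
  (q.1 - p.1) * (r.2 - p.2) - (q.2 - p.2) * (r.1 - p.1)

lemma cross_rotate (p q r : Pt) : cross p q r = cross q r p := by
  unfold cross; ring

lemma cross_swap (p q r : Pt) : cross p q r = -cross p r q := by
  unfold cross; ring

lemma cross_self_left (p q : Pt) : cross p q p = 0 := by
  unfold cross; ring

lemma cross_self_right (p q : Pt) : cross p q q = 0 := by
  unfold cross; ring

/-- `cross p q` is affine in its last argument. -/
lemma cross_lineMap (p q a c : Pt) (s : ℝ) :
    cross p q (AffineMap.lineMap a c s) = (1 - s) * cross p q a + s * cross p q c := by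
  unfold cross
  simp [AffineMap.lineMap_apply]
  ring

lemma mem_lineThrough_of_cross {p q x : Pt} (hpq : p ≠ q) (h : cross p q x = 0) :
    x ∈ lineThrough p q := by
  have hN : (q.1 - p.1) ^ 2 + (q.2 - p.2) ^ 2 ≠ 0 := by
    intro h0
    apply hpq
    have h1 : q.1 - p.1 = 0 := by nlinarith [sq_nonneg (q.1 - p.1), sq_nonneg (q.2 - p.2)]
    have h2 : q.2 - p.2 = 0 := by nlinarith [sq_nonneg (q.1 - p.1), sq_nonneg (q.2 - p.2)]
    ext <;> linarith
  unfold lineThrough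
  rw [SetLike.mem_coe, mem_affineSpan_pair_iff_exists_lineMap_eq]
  -- the parameter of the orthogonal projection of `x` to the line
  refine ⟨((x.1 - p.1) * (q.1 - p.1) + (x.2 - p.2) * (q.2 - p.2)) /
    ((q.1 - p.1) ^ 2 + (q.2 - p.2) ^ 2), ?_⟩
  unfold cross at h
  ext
  · simp [AffineMap.lineMap_apply]
    field_simp
    linear_combination (q.2 - p.2) * h
  · simp [AffineMap.lineMap_apply]
    field_simp
    linear_combination -(q.1 - p.1) * h

/-- All points of `Q` lie strictly on one side of a line through two points of `P`. -/
lemma cross_mul_pos {P Q : Finset Pt} (h : AvoidsHull P Q) {p p' q q' : Pt}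
    (hp : p ∈ P) (hp' : p' ∈ P) (hne : p ≠ p') (hq : q ∈ Q) (hq' : q' ∈ Q) :
    0 < cross p p' q * cross p p' q' := by
  have key : ∀ x ∈ convexHull ℝ (Q : Set Pt), cross p p' x ≠ 0 := fun x hx h0 =>
    Set.disjoint_left.mp (h p hp p' hp' hne) (mem_lineThrough_of_cross hne h0) hx
  have hqh := subset_convexHull ℝ (Q : Set Pt) hq
  have hqh' := subset_convexHull ℝ (Q : Set Pt) hq'
  have h1 := key q hqh
  have h2 := key q' hqh'
  by_contra hcon
  have hlt : cross p p' q * cross p p' q' < 0 :=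
    lt_of_le_of_ne (not_lt.mp hcon) (mul_ne_zero h1 h2)
  set u := cross p p' q with hu
  set w := cross p p' q' with hw
  have hd : u - w ≠ 0 := by
    intro h0
    have : u = w := by linarith
    rw [this] at hlt
    nlinarith [sq_nonneg w]
  have hsq : 0 < (u - w) ^ 2 := by positivity
  -- the segment `q q'` meets the line at this parameter
  have ht : u / (u - w) = u * (u - w) / (u - w) ^ 2 := by field_simp
  have ht0 : 0 ≤ u / (u - w) := by
    rw [ht]
    exact div_nonneg (by nlinarith [sq_nonneg u]) hsq.le
  have ht1 : u / (u - w) ≤ 1 := by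
    rw [ht, div_le_one hsq]
    nlinarith [sq_nonneg w]
  refine key _ ((convex_convexHull ℝ (Q : Set Pt)).lineMap_mem hqh hqh' ⟨ht0, ht1⟩) ?_
  rw [cross_lineMap, ← hu, ← hw]
  field_simp
  ring

lemma notMem_convexHull {P Q : Finset Pt} (h : AvoidsHull P Q) (hP : 1 < P.card) {p : Pt}
    (hp : p ∈ P) : p ∉ convexHull ℝ (Q : Set Pt) := by
  obtain ⟨p', hp', hne⟩ := Finset.exists_mem_ne hP p
  exact Set.disjoint_left.mp (h p hp p' hp' hne.symm) (left_mem_affineSpan_pair ℝ _ _)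

/-- Seen from a point outside the hull of `S`, the counterclockwise order on `S` is
transitive: a cyclic triple would have `p` in its hull. -/
lemma cross_trans {S : Set Pt} {p x y z : Pt} (hp : p ∉ convexHull ℝ S)
    (hx : x ∈ S) (hy : y ∈ S) (hz : z ∈ S) (h1 : 0 < cross p x y) (h2 : 0 < cross p y z) :
    0 < cross p x z := by
  by_contra hcon
  have h3 : 0 ≤ cross p z x := by
    rw [cross_swap]; linarith
  apply hp
  set u := cross p y z with hu
  set v := cross p z x with hv
  set w := cross p x y with hw
  have hs : 0 < u + v + w := by linarith
  have hmem := (convex_convexHull ℝ S).sum_mem (t := Finset.univ)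
    (w := ![u / (u + v + w), v / (u + v + w), w / (u + v + w)]) (z := ![x, y, z])
    (by
      intro i _
      fin_cases i
      · exact div_nonneg h2.le hs.le
      · exact div_nonneg h3 hs.le
      · exact div_nonneg h1.le hs.le)
    (by simp [Fin.sum_univ_three]; field_simp)
    (by
      intro i _
      fin_cases i
      · exact subset_convexHull ℝ S hx
      · exact subset_convexHull ℝ S hy
      · exact subset_convexHull ℝ S hz)
  convert hmem using 1
  simp only [Fin.sum_univ_three, Matrix.cons_val_zero, Matrix.cons_val_one, Matrix.cons_val]
  ext
  · simp
    field_simp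
    simp only [hu, hv, hw, cross]
    ring
  · simp
    field_simp
    simp only [hu, hv, hw, cross]
    ring

lemma exists_enum_type {α : Type*} [Fintype α] {n : ℕ} (hn : Fintype.card α = n)
    (r : α → α → Prop) (hr : IsStrictTotalOrder α r) :
    ∃ f : Fin n ≃ α, ∀ i j, i < j → r (f i) (f j) := by
  classical
  let : LinearOrder α := linearOrderOfSTO r
  let f := Fintype.orderIsoFinOfCardEq α hn
  exact ⟨f.toEquiv, fun i j h => f.lt_iff_lt.mpr h⟩

lemma exists_enum {n : ℕ} {S : Finset Pt} (hS : S.card = n) (r : Pt → Pt → Prop)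
    (irr : ∀ x ∈ S, ¬ r x x)
    (tr : ∀ x ∈ S, ∀ y ∈ S, ∀ z ∈ S, r x y → r y z → r x z)
    (tot : ∀ x ∈ S, ∀ y ∈ S, x ≠ y → r x y ∨ r y x) :
    ∃ e : Fin n → Pt, Function.Injective e ∧ (∀ x, x ∈ S ↔ ∃ i, e i = x) ∧
      ∀ i j, i < j → r (e i) (e j) := by
  classical
  let r' : S → S → Prop := fun x y => r x y
  have : Std.Irrefl r' := ⟨fun x => irr x x.2⟩
  have : IsTrans S r' := ⟨fun x y z => tr x x.2 y y.2 z z.2⟩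
  have : Std.Trichotomous r' := ⟨fun x y hxy hyx => by
    by_contra hne
    rcases tot x x.2 y y.2 (fun h => hne (Subtype.ext h)) with h | h
    · exact hxy h
    · exact hyx h⟩
  obtain ⟨f, hf⟩ := exists_enum_type (n := n) (by simpa using hS) r' {}
  refine ⟨fun i => (f i : Pt), fun i j h => f.injective (Subtype.ext h),
    fun x => ⟨fun hx => ⟨f.symm ⟨x, hx⟩, by simp⟩, ?_⟩, hf⟩
  rintro ⟨i, rfl⟩
  exact (f i).2

/-- Enumeration of `S` in the order seen from `T`; the sign of `ε` selects the direction. -/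
lemma exists_enum_seen {n : ℕ} {S T : Finset Pt} (hS : S.card = n) (hT : 1 < T.card)
    (hST : AvoidsHull S T) (hTS : AvoidsHull T S) {ε : ℝ} (hε : ε ≠ 0) :
    ∃ e : Fin n → Pt, Function.Injective e ∧ (∀ x, x ∈ S ↔ ∃ i, e i = x) ∧
      ∀ i j, i < j → ∀ p ∈ T, 0 < ε * cross p (e i) (e j) := by
  have hpos : ∀ p ∈ T, ∀ q ∈ T, ∀ x ∈ S, ∀ y ∈ S, x ≠ y → 0 < cross p x y * cross q x y := by
    intro p hp q hq x hx y hy hne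
    rw [cross_rotate p, cross_rotate q]
    exact cross_mul_pos hST hx hy hne hp hq
  obtain ⟨p₀, hp₀⟩ : T.Nonempty := Finset.card_pos.mp (by omega)
  have hout := notMem_convexHull hTS hT hp₀
  obtain ⟨e, he, hr, hlt⟩ := exists_enum hS (fun x y => 0 < ε * cross p₀ x y)
    (fun x _ => by simp [cross_self_right])
    (by
      intro x hx y hy z hz h1 h2
      rcases lt_or_gt_of_ne hε with h | h
      · have h1' := neg_of_mul_pos_right h1 h.le
        have h2' := neg_of_mul_pos_right h2 h.le
        rw [cross_swap] at h1' h2'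
        have := cross_trans hout hz hy hx (by linarith) (by linarith)
        rw [cross_swap] at this
        exact mul_pos_of_neg_of_neg h (by linarith)
      · exact mul_pos h (cross_trans hout hx hy hz (pos_of_mul_pos_right h1 h.le)
          (pos_of_mul_pos_right h2 h.le)))
    (by
      intro x hx y hy hne
      have h := hpos p₀ hp₀ p₀ hp₀ x hx y hy hne
      have hc : ε * cross p₀ x y ≠ 0 := mul_ne_zero hε (by rintro h0; simp [h0] at h)
      rw [cross_swap p₀ y x]
      rcases lt_or_gt_of_ne hc with h' | h'
      · right; linarith
      · left; exact h')
  refine ⟨e, he, hr, fun i j hij p hp => ?_⟩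
  have h1 := hlt i j hij
  have h2 := hpos p₀ hp₀ p hp _ ((hr _).mpr ⟨i, rfl⟩) _ ((hr _).mpr ⟨j, rfl⟩)
    (fun h => hij.ne (he h))
  by_contra hcon
  rcases lt_or_gt_of_ne hε with h | h
  · have hneg := neg_of_mul_pos_right h1 h.le
    nlinarith [neg_of_mul_pos_right h2 hneg.le]
  · have hpos := pos_of_mul_pos_right h1 h.le
    nlinarith [pos_of_mul_pos_right h2 hpos.le]

/-- Any two points of `P` (equal or not) lie on a line through two distinct points of `P`. -/
lemma exists_line {P : Finset Pt} (hP : 1 < P.card) {x y : Pt} (hx : x ∈ P) (hy : y ∈ P) :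
    ∃ p ∈ P, ∃ q ∈ P, p ≠ q ∧ cross p q x = 0 ∧ cross p q y = 0 := by
  by_cases h : x = y
  · obtain ⟨z, hz, hne⟩ := Finset.exists_mem_ne hP x
    exact ⟨x, hx, z, hz, hne.symm, cross_self_left _ _, h ▸ cross_self_left _ _⟩
  · exact ⟨x, hx, y, hy, h, cross_self_left _ _, cross_self_right _ _⟩

lemma sign_aux {s t x x' y y' : ℝ} (hx : x = s * y) (hx' : x' = t * y')
    (h1 : 0 < x * x') (h2 : 0 < y * y') : 0 < s * t := by
  subst hx hx'
  have : s * y * (t * y') = (s * t) * (y * y') := by ring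
  rw [this] at h1
  exact pos_of_mul_pos_left h1 h2.le

lemma exists_param {A B C : Finset Pt} (hA : 1 < A.card) (hB : 1 < B.card)
    (hAvoid : MutuallyAvoiding A B C) {a b c : Pt} (ha : a ∈ A) (hb : b ∈ B) (hc : c ∈ C)
    (h : Collinear ℝ {a, b, c}) : ∃ s : ℝ, s ≠ 0 ∧ 1 - s ≠ 0 ∧ b = AffineMap.lineMap a c s := by
  obtain ⟨hAB, hAC, hBA, hBC, hCA, hCB⟩ := hAvoid
  have hac : a ≠ c := fun h => notMem_convexHull hAC hA ha (h ▸ subset_convexHull ℝ _ hc)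
  have hba : b ≠ a := fun h => notMem_convexHull hBA hB hb (h ▸ subset_convexHull ℝ _ ha)
  have hbc : b ≠ c := fun h => notMem_convexHull hBC hB hb (h ▸ subset_convexHull ℝ _ hc)
  have hm := h.mem_affineSpan_of_mem_of_ne (p₁ := a) (p₂ := c) (p₃ := b)
    (by simp) (by simp) (by simp) hac
  rw [mem_affineSpan_pair_iff_exists_lineMap_eq] at hm
  obtain ⟨s, rfl⟩ := hm
  refine ⟨s, ?_, ?_, rfl⟩
  · rintro rfl; simp at hba
  · intro h1
    have : s = 1 := by linarith
    subst this
    simp at hbc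

/-- All transversal collinear triples have their middle point in the same set: the signs of the
parameter `s` of `b = (1 - s) a + s c` and of `1 - s` do not depend on the triple. -/
lemma exists_uniform_signs {A B C : Finset Pt} (hA : 1 < A.card) (hB : 1 < B.card)
    (hC : 1 < C.card) (hAvoid : MutuallyAvoiding A B C) :
    ∃ σ τ : ℝ, σ ≠ 0 ∧ τ ≠ 0 ∧ ∀ a ∈ A, ∀ b ∈ B, ∀ c ∈ C, Collinear ℝ {a, b, c} →
      ∃ s : ℝ, 0 < s * σ ∧ 0 < (1 - s) * τ ∧ b = AffineMap.lineMap a c s := by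
  by_cases hex : ∃ a ∈ A, ∃ b ∈ B, ∃ c ∈ C, Collinear ℝ {a, b, c}
  · obtain ⟨a₀, ha₀, b₀, hb₀, c₀, hc₀, hcol₀⟩ := hex
    obtain ⟨σ, hσ, hτ, h0⟩ := exists_param hA hB hAvoid ha₀ hb₀ hc₀ hcol₀
    refine ⟨σ, 1 - σ, hσ, hτ, fun a ha b hb c hc hcol => ?_⟩
    obtain ⟨s, -, -, h1⟩ := exists_param hA hB hAvoid ha hb hc hcol
    obtain ⟨hAB, hAC, hBA, hBC, hCA, hCB⟩ := hAvoid
    refine ⟨s, ?_, ?_, h1⟩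
    · obtain ⟨p, hp, q, hq, hpq, e1, e2⟩ := exists_line hA ha ha₀
      refine sign_aux (x := cross p q b) (x' := cross p q b₀) (y := cross p q c)
        (y' := cross p q c₀) ?_ ?_ (cross_mul_pos hAB hp hq hpq hb hb₀)
        (cross_mul_pos hAC hp hq hpq hc hc₀)
      · rw [h1, cross_lineMap, e1]; ring
      · rw [h0, cross_lineMap, e2]; ring
    · obtain ⟨p, hp, q, hq, hpq, e1, e2⟩ := exists_line hC hc hc₀
      refine sign_aux (x := cross p q b) (x' := cross p q b₀) (y := cross p q a)
        (y' := cross p q a₀) ?_ ?_ (cross_mul_pos hCB hp hq hpq hb hb₀)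
        (cross_mul_pos hCA hp hq hpq ha ha₀)
      · rw [h1, cross_lineMap, e1]; ring
      · rw [h0, cross_lineMap, e2]; ring
  · refine ⟨1, 1, one_ne_zero, one_ne_zero, fun a ha b hb c hc hcol => ?_⟩
    exact absurd ⟨a, ha, b, hb, c, hc, hcol⟩ hex

/-- An enumeration increasing for the order seen from `p` reflects that order. -/
lemma lt_of_cross_pos {n : ℕ} {e : Fin n → Pt} {p : Pt}
    (he : ∀ i j, i < j → 0 < (1 : ℝ) * cross p (e i) (e j)) {i j : Fin n}
    (h : 0 < cross p (e i) (e j)) : i < j := by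
  rcases lt_trichotomy i j with h' | h' | h'
  · exact h'
  · subst h'
    simp [cross_self_right] at h
  · have := he j i h'
    rw [cross_swap] at this
    linarith

/-- Mutually avoiding `n`-point sets `A, B, C` admit enumerations
`a, b, c : Fin n → Pt` satisfying the three order-consistency conditions for collinear
triples with one point in each set. -/
theorem statement2 (n : ℕ) (A B C : Finset Pt)
    (hA : A.card = n) (hB : B.card = n) (hC : C.card = n)
    (hAvoid : MutuallyAvoiding A B C) :
    ∃ a b c : Fin n → Pt,
      Function.Injective a ∧ Function.Injective b ∧ Function.Injective c ∧
      (∀ x : Pt, x ∈ A ↔ ∃ i, a i = x) ∧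
      (∀ x : Pt, x ∈ B ↔ ∃ j, b j = x) ∧
      (∀ x : Pt, x ∈ C ↔ ∃ k, c k = x) ∧
      (∀ i j₁ j₂ k₁ k₂ : Fin n, Collinear ℝ {a i, b j₁, c k₁} →
        Collinear ℝ {a i, b j₂, c k₂} → j₁ < j₂ → k₁ < k₂) ∧
      (∀ i₁ i₂ j k₁ k₂ : Fin n, Collinear ℝ {a i₁, b j, c k₁} →
        Collinear ℝ {a i₂, b j, c k₂} → i₂ < i₁ → k₁ < k₂) ∧
      (∀ i₁ i₂ j₁ j₂ k : Fin n, Collinear ℝ {a i₁, b j₁, c k} →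
        Collinear ℝ {a i₂, b j₂, c k} → i₁ < i₂ → j₁ < j₂) := by
  rcases Nat.lt_or_ge 1 n with hn | hn
  swap
  · -- with at most one index, the order conditions are vacuous
    have : Subsingleton (Fin n) := Fin.subsingleton_iff_le_one.mpr hn
    have hlt : ∀ i j : Fin n, ¬ i < j := fun i j h => h.ne (Subsingleton.elim i j)
    have hen : ∀ S : Finset Pt, S.card = n → ∃ e : Fin n → Pt, Function.Injective e ∧
        (∀ x, x ∈ S ↔ ∃ i, e i = x) := by
      intro S hS
      let f := (S.equivFinOfCardEq hS).symm
      refine ⟨fun i => (f i : Pt), fun i j _ => Subsingleton.elim i j, fun x => ⟨fun hx => ?_, ?_⟩⟩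
      · exact ⟨f.symm ⟨x, hx⟩, by simp⟩
      · rintro ⟨i, rfl⟩
        exact (f i).2
    obtain ⟨a, ha, ha'⟩ := hen A hA
    obtain ⟨b, hb, hb'⟩ := hen B hB
    obtain ⟨c, hc, hc'⟩ := hen C hC
    exact ⟨a, b, c, ha, hb, hc, ha', hb', hc', fun _ _ _ _ _ _ _ h => absurd h (hlt _ _),
      fun _ _ _ _ _ _ _ h => absurd h (hlt _ _), fun _ _ _ _ _ _ _ h => absurd h (hlt _ _)⟩
  obtain ⟨σ, τ, hσ, hτ, hs⟩ := exists_uniform_signs (hA ▸ hn) (hB ▸ hn) (hC ▸ hn) hAvoid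
  obtain ⟨hAB, hAC, hBA, hBC, hCA, hCB⟩ := hAvoid
  have hε : -(σ * τ) ≠ 0 := neg_ne_zero.mpr (mul_ne_zero hσ hτ)
  obtain ⟨a, ha, ha', hao⟩ := exists_enum_seen hA (hC ▸ hn) hAC hCA hε
  obtain ⟨b, hb, hb', hbo⟩ := exists_enum_seen hB (hA ▸ hn) hBA hAB one_ne_zero
  obtain ⟨c, hc, hc', hco⟩ := exists_enum_seen hC (hA ▸ hn) hCA hAC one_ne_zero
  have mA : ∀ i, a i ∈ A := fun i => (ha' _).mpr ⟨i, rfl⟩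
  have mB : ∀ i, b i ∈ B := fun i => (hb' _).mpr ⟨i, rfl⟩
  have mC : ∀ i, c i ∈ C := fun i => (hc' _).mpr ⟨i, rfl⟩
  refine ⟨a, b, c, ha, hb, hc, ha', hb', hc', ?_, ?_, ?_⟩
  · intro i j₁ j₂ k₁ k₂ h1 h2 hlt
    obtain ⟨s, hs1, -, e1⟩ := hs _ (mA i) _ (mB j₁) _ (mC k₁) h1
    obtain ⟨t, ht1, -, e2⟩ := hs _ (mA i) _ (mB j₂) _ (mC k₂) h2
    have h := hbo _ _ hlt _ (mA i)
    apply lt_of_cross_pos (fun i' j' h => hco i' j' h _ (mA i))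
    have hst : 0 < s * t := sign_aux (y := σ) (y' := σ) rfl rfl (mul_pos hs1 ht1)
      (mul_self_pos.mpr hσ)
    have : cross (a i) (b j₁) (b j₂) = s * t * cross (a i) (c k₁) (c k₂) := by
      rw [e1, e2]
      simp [cross, AffineMap.lineMap_apply]
      ring
    rw [this, one_mul] at h
    exact pos_of_mul_pos_right h hst.le
  · intro i₁ i₂ j k₁ k₂ h1 h2 hlt
    obtain ⟨s, hs1, hs2, e1⟩ := hs _ (mA i₁) _ (mB j) _ (mC k₁) h1
    obtain ⟨t, ht1, ht2, e2⟩ := hs _ (mA i₂) _ (mB j) _ (mC k₂) h2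
    have h := hao _ _ hlt _ (mC k₁)
    apply lt_of_cross_pos (fun i' j' h => hco i' j' h _ (mA i₁))
    have hst : 0 < s * t := sign_aux (y := σ) (y' := σ) rfl rfl (mul_pos hs1 ht1)
      (mul_self_pos.mpr hσ)
    have hst' : 0 < (1 - s) * (1 - t) := sign_aux (y := τ) (y' := τ) rfl rfl (mul_pos hs2 ht2)
      (mul_self_pos.mpr hτ)
    -- change of viewpoint on `A`, on the pencil through `b j`, and on `C`
    have hα : cross (b j) (a i₂) (a i₁) = s * cross (c k₁) (a i₂) (a i₁) := by
      rw [cross_rotate (b j), cross_rotate (c k₁), e1, cross_lineMap, cross_self_right]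
      ring
    have hβ : (1 - s) * (1 - t) * cross (b j) (a i₂) (a i₁)
        = s * t * cross (b j) (c k₂) (c k₁) := by
      have x1 := congrArg Prod.fst e1
      have y1 := congrArg Prod.snd e1
      have x2 := congrArg Prod.fst e2
      have y2 := congrArg Prod.snd e2
      simp [AffineMap.lineMap_apply] at x1 y1 x2 y2
      have X1 : (1 - s) * ((a i₁).1 - (b j).1) = -s * ((c k₁).1 - (b j).1) := by
        linear_combination -x1
      have Y1 : (1 - s) * ((a i₁).2 - (b j).2) = -s * ((c k₁).2 - (b j).2) := by
        linear_combination -y1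
      have X2 : (1 - t) * ((a i₂).1 - (b j).1) = -t * ((c k₂).1 - (b j).1) := by
        linear_combination -x2
      have Y2 : (1 - t) * ((a i₂).2 - (b j).2) = -t * ((c k₂).2 - (b j).2) := by
        linear_combination -y2
      have : (1 - s) * (1 - t) * cross (b j) (a i₂) (a i₁)
          = ((1 - t) * ((a i₂).1 - (b j).1)) * ((1 - s) * ((a i₁).2 - (b j).2))
            - ((1 - t) * ((a i₂).2 - (b j).2)) * ((1 - s) * ((a i₁).1 - (b j).1)) := by
        unfold cross; ring
      rw [this, X1, Y1, X2, Y2]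
      unfold cross; ring
    have hγ : cross (b j) (c k₂) (c k₁) = (1 - s) * cross (a i₁) (c k₂) (c k₁) := by
      rw [cross_rotate (b j), cross_rotate (a i₁), e1, cross_lineMap, cross_self_right]
      ring
    rw [cross_swap]
    rw [hγ, hα] at hβ
    set X := cross (c k₁) (a i₂) (a i₁)
    set Y := cross (a i₁) (c k₂) (c k₁)
    -- `h` says that `X` has the sign opposite to `σ * τ`, i.e. to `s * (1 - s)`
    have hX : 0 < -(s * (1 - s) * X) := by
      have h3 : 0 < (-(s * (1 - s) * X)) * (σ * τ) ^ 2 := by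
        have := mul_pos (mul_pos hs1 hs2) h
        linarith [this, show s * σ * ((1 - s) * τ) * (-(σ * τ) * X)
          = (-(s * (1 - s) * X)) * (σ * τ) ^ 2 by ring]
      exact pos_of_mul_pos_left h3 (sq_nonneg _)
    have hs0 : (1 - s) ≠ 0 := fun h0 => by simp [h0] at hs2
    have h4 : 0 < s * t * (1 - s) ^ 2 * (-Y) := by
      have h5 := mul_pos hst' hX
      have : (1 - s) * (1 - t) * (-(s * (1 - s) * X))
          = s * t * (1 - s) ^ 2 * (-Y) := by linear_combination -(1 - s) * hβ
      rwa [this] at h5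
    exact pos_of_mul_pos_right h4 (by positivity)
  · intro i₁ i₂ j₁ j₂ k h1 h2 hlt
    obtain ⟨s, hs1, hs2, e1⟩ := hs _ (mA i₁) _ (mB j₁) _ (mC k) h1
    obtain ⟨t, ht1, ht2, e2⟩ := hs _ (mA i₂) _ (mB j₂) _ (mC k) h2
    have h := hao _ _ hlt _ (mC k)
    apply lt_of_cross_pos (fun i' j' h => hbo i' j' h _ (mA i₁))
    have hst' : 0 < (1 - s) * (1 - t) := sign_aux (y := τ) (y' := τ) rfl rfl (mul_pos hs2 ht2)
      (mul_self_pos.mpr hτ)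
    have hγ : cross (c k) (b j₁) (b j₂) = (1 - s) * (1 - t) * cross (c k) (a i₁) (a i₂) := by
      rw [e1, e2]
      simp [cross, AffineMap.lineMap_apply]
      ring
    have hβ : (1 - s) * cross (a i₁) (b j₁) (b j₂) = -s * cross (c k) (b j₁) (b j₂) := by
      have := cross_lineMap (b j₁) (b j₂) (a i₁) (c k) s
      rw [← e1, cross_self_left] at this
      rw [cross_rotate (a i₁), cross_rotate (c k)]
      linear_combination -this
    rw [hγ] at hβ
    set X := cross (c k) (a i₁) (a i₂)
    set Y := cross (a i₁) (b j₁) (b j₂)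
    have hX : 0 < -(s * (1 - s) * X) := by
      have h3 : 0 < (-(s * (1 - s) * X)) * (σ * τ) ^ 2 := by
        have := mul_pos (mul_pos hs1 hs2) h
        linarith [this, show s * σ * ((1 - s) * τ) * (-(σ * τ) * X)
          = (-(s * (1 - s) * X)) * (σ * τ) ^ 2 by ring]
      exact pos_of_mul_pos_left h3 (sq_nonneg _)
    have h4 : 0 < (1 - s) ^ 2 * Y := by
      have h5 := mul_pos hst' hX
      have : (1 - s) * (1 - t) * (-(s * (1 - s) * X)) = (1 - s) ^ 2 * Y := by
        linear_combination -(1 - s) * hβ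
      rwa [this] at h5
    exact pos_of_mul_pos_right h4 (by positivity)
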